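/- For all integers 0 ≤ k ≤ n, Σ_p (−1)^{h(p)} = C(n,k) (the binomial coefficient), where the sum is over all Schröder paths p of semilength n with exactly k hills and h(p) denotes the number of horizontal steps of p at positive height; that is, the specialization u=1, v=−1 of the weighted triangle [r_{u,v}(n,k)] is Pascal's triangle. -/

import Mathlib

/-!
The signed count is computed for a wider class of objects: paths that start at an arbitrary height
`h`, end at height `0`, never go below the axis and contain `m` steps that are `U` or `H`
(`IsPathFrom m h`). Let `f(m, h, k)` be the sum of `(-1)^{#H at positive height}` over those with
`k` hills. Then `f(m, h, k) = C(m, k)` for every `h` (`sum_wt`).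

Splitting off the first step at a positive height gives
`f(m+1, h+1, k) = f(m+1, h, k) - f(m, h+1, k) + f(m, h+2, k)`,
where the last two terms cancel by induction on `m`. At height `0`, a first step `H` contributes
`f(m, 0, k) = C(m, k)`. After a first step `U`, the continuations that do not start with `D` have
total weight `f(m, 1, k) - f(m, 0, k) = 0`, and those that start with `D` complete a hill and
contribute `f(m, 0, k-1) = C(m, k-1)` (`sum_wt_up`). Pascal's rule finishes the induction.
-/

/-- A step of a Schröder path: up `(1,1)`, down `(1,-1)`, or horizontal `(2,0)`. -/
inductive SStep : Type
  | U | D | H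
  deriving DecidableEq

/-- `IsSchroeder n w` : `w` is a Schröder path of semilength `n`. -/
def IsSchroeder (n : ℕ) (w : List SStep) : Prop :=
  w.count SStep.U = w.count SStep.D ∧
  w.count SStep.U + w.count SStep.H = n ∧
  ∀ i : ℕ, (w.take i).count SStep.D ≤ (w.take i).count SStep.U

/-- The number of hills: occurrences of the factor `UD` starting at height `0`. -/
def hills (w : List SStep) : ℕ :=
  ((Finset.range w.length).filter (fun i =>
    w[i]? = some SStep.U ∧ w[i+1]? = some SStep.D ∧
    (w.take i).count SStep.U = (w.take i).count SStep.D)).card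

/-- The number of horizontal steps at height `0`. -/
def h0 (w : List SStep) : ℕ :=
  ((Finset.range w.length).filter (fun i =>
    w[i]? = some SStep.H ∧
    (w.take i).count SStep.U = (w.take i).count SStep.D)).card

/-- The number of horizontal steps at positive height. -/
def hpos (w : List SStep) : ℕ :=
  ((Finset.range w.length).filter (fun i =>
    w[i]? = some SStep.H ∧
    (w.take i).count SStep.D < (w.take i).count SStep.U)).card

/-- `r n k` : the number of Schröder paths of semilength `n` with exactly `k` hills. -/
noncomputable def r (n k : ℕ) : ℕ :=
  Nat.card {w : List SStep // IsSchroeder n w ∧ hills w = k}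

/-- A little Schröder path: a Schröder path with no horizontal step at height `0`. -/
def IsLittle (n : ℕ) (w : List SStep) : Prop :=
  IsSchroeder n w ∧ h0 w = 0

/-- `s n k` : the number of little Schröder paths of semilength `n` with exactly `k` hills. -/
noncomputable def s (n k : ℕ) : ℕ :=
  Nat.card {w : List SStep // IsLittle n w ∧ hills w = k}

open SStep

/-! ### Paths starting at a given height -/

/-- `w` is a path from height `h` down to height `0`, staying weakly above the axis, with `m` steps
that are up or horizontal. -/
def IsPathFrom (m h : ℕ) (w : List SStep) : Prop :=
  h + w.count U = w.count D ∧ w.count U + w.count H = m ∧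
  ∀ i : ℕ, (w.take i).count D ≤ h + (w.take i).count U

/-- The number of hills of `w` when `w` is read from starting height `h`. -/
def hillsFrom (h : ℕ) (w : List SStep) : ℕ :=
  ((Finset.range w.length).filter (fun i =>
    w[i]? = some U ∧ w[i+1]? = some D ∧
    h + (w.take i).count U = (w.take i).count D)).card

/-- The number of horizontal steps of `w` at positive height when `w` is read from starting
height `h`. -/
def hposFrom (h : ℕ) (w : List SStep) : ℕ :=
  ((Finset.range w.length).filter (fun i =>
    w[i]? = some H ∧ (w.take i).count D < h + (w.take i).count U)).card

theorem hillsFrom_U (h : ℕ) (w : List SStep) :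
    hillsFrom h (U :: w) = hillsFrom (h + 1) w + if w[0]? = some D ∧ h = 0 then 1 else 0 := by
  unfold hillsFrom
  simp only [Finset.card_filter, List.length_cons, Finset.sum_range_succ']
  congr 1
  · refine Finset.sum_congr rfl fun i _ => ?_
    simp [add_assoc, add_comm 1]
  · simp

theorem hillsFrom_D (h : ℕ) (w : List SStep) :
    hillsFrom (h + 1) (D :: w) = hillsFrom h w := by
  unfold hillsFrom
  simp only [Finset.card_filter, List.length_cons, Finset.sum_range_succ']
  simp [add_right_comm h 1]

theorem hillsFrom_H (h : ℕ) (w : List SStep) :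
    hillsFrom h (H :: w) = hillsFrom h w := by
  unfold hillsFrom
  simp only [Finset.card_filter, List.length_cons, Finset.sum_range_succ']
  simp

theorem hposFrom_U (h : ℕ) (w : List SStep) :
    hposFrom h (U :: w) = hposFrom (h + 1) w := by
  unfold hposFrom
  simp only [Finset.card_filter, List.length_cons, Finset.sum_range_succ']
  simp [add_assoc, add_comm 1]

theorem hposFrom_D (h : ℕ) (w : List SStep) :
    hposFrom (h + 1) (D :: w) = hposFrom h w := by
  unfold hposFrom
  simp only [Finset.card_filter, List.length_cons, Finset.sum_range_succ']
  simp [add_right_comm h 1]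

theorem hposFrom_H (h : ℕ) (w : List SStep) :
    hposFrom h (H :: w) = hposFrom h w + if 0 < h then 1 else 0 := by
  unfold hposFrom
  simp only [Finset.card_filter, List.length_cons, Finset.sum_range_succ']
  simp

/-! ### Enumeration of the paths -/

/-- Prepending a fixed step, as an embedding. -/
def consEmb (a : SStep) : List SStep ↪ List SStep := ⟨List.cons a, List.cons_injective⟩

/-- The finite set of words satisfying `IsPathFrom m h`, generated by first step. -/
def paths : ℕ → ℕ → Finset (List SStep)
  | 0, 0 => {[]}
  | 0, h + 1 => (paths 0 h).map (consEmb D)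
  | m + 1, 0 => (paths m 0).map (consEmb H) ∪ (paths m 1).map (consEmb U)
  | m + 1, h + 1 => (paths (m + 1) h).map (consEmb D) ∪
      ((paths m (h + 1)).map (consEmb H) ∪ (paths m (h + 2)).map (consEmb U))

theorem isPathFrom_nil (m h : ℕ) : IsPathFrom m h [] ↔ m = 0 ∧ h = 0 := by
  simp [IsPathFrom]; omega

theorem isPathFrom_U (m h : ℕ) (w : List SStep) :
    IsPathFrom m h (U :: w) ↔ ∃ m', m = m' + 1 ∧ IsPathFrom m' (h + 1) w := by
  unfold IsPathFrom
  constructor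
  · rintro ⟨h1, h2, h3⟩
    simp at h1 h2
    refine ⟨m - 1, by omega, by omega, by omega, fun i => ?_⟩
    have := h3 (i + 1)
    simp at this
    omega
  · rintro ⟨m', rfl, h1, h2, h3⟩
    refine ⟨by simp; omega, by simp; omega, fun i => ?_⟩
    cases i with
    | zero => simp
    | succ i => have := h3 i; simp; omega

theorem isPathFrom_H (m h : ℕ) (w : List SStep) :
    IsPathFrom m h (H :: w) ↔ ∃ m', m = m' + 1 ∧ IsPathFrom m' h w := by
  unfold IsPathFrom
  constructor
  · rintro ⟨h1, h2, h3⟩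
    simp at h1 h2
    refine ⟨m - 1, by omega, by omega, by omega, fun i => ?_⟩
    have := h3 (i + 1)
    simp at this
    omega
  · rintro ⟨m', rfl, h1, h2, h3⟩
    refine ⟨by simp; omega, by simp; omega, fun i => ?_⟩
    cases i with
    | zero => simp
    | succ i => have := h3 i; simp; omega

theorem isPathFrom_D (m h : ℕ) (w : List SStep) :
    IsPathFrom m h (D :: w) ↔ ∃ h', h = h' + 1 ∧ IsPathFrom m h' w := by
  unfold IsPathFrom
  constructor
  · rintro ⟨h1, h2, h3⟩
    simp at h1 h2
    have h0 := h3 1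
    simp at h0
    refine ⟨h - 1, by omega, by omega, by omega, fun i => ?_⟩
    have := h3 (i + 1)
    simp at this
    omega
  · rintro ⟨m', rfl, h1, h2, h3⟩
    refine ⟨by simp; omega, by simp; omega, fun i => ?_⟩
    cases i with
    | zero => simp
    | succ i => have := h3 i; simp; omega

theorem mem_paths (w : List SStep) : ∀ m h : ℕ, w ∈ paths m h ↔ IsPathFrom m h w := by
  induction w with
  | nil =>
    intro m h
    rw [isPathFrom_nil]
    rcases m with _ | m <;> rcases h with _ | h <;> simp [paths, consEmb]
  | cons a w ih =>
    intro m h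
    cases a <;> simp only [isPathFrom_U, isPathFrom_D, isPathFrom_H, ← ih] <;>
    rcases m with _ | m <;> rcases h with _ | h <;> simp [paths, consEmb]

theorem sum_paths_zero_succ (φ : List SStep → ℤ) (h : ℕ) :
    ∑ w ∈ paths 0 (h + 1), φ w = ∑ w ∈ paths 0 h, φ (D :: w) := by
  simp [paths, consEmb]

theorem sum_paths_succ_zero (φ : List SStep → ℤ) (m : ℕ) :
    ∑ w ∈ paths (m + 1) 0, φ w =
      ∑ w ∈ paths m 0, φ (H :: w) + ∑ w ∈ paths m 1, φ (U :: w) := by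
  rw [paths, Finset.sum_union]
  · simp [consEmb]
  · simp [Finset.disjoint_left, consEmb]

theorem sum_paths_succ_succ (φ : List SStep → ℤ) (m h : ℕ) :
    ∑ w ∈ paths (m + 1) (h + 1), φ w =
      ∑ w ∈ paths (m + 1) h, φ (D :: w) +
        (∑ w ∈ paths m (h + 1), φ (H :: w) + ∑ w ∈ paths m (h + 2), φ (U :: w)) := by
  rw [paths, Finset.sum_union, Finset.sum_union]
  · simp [consEmb]
  · simp [Finset.disjoint_left, consEmb]
  · simp only [Finset.disjoint_left, consEmb]
    aesop

/-! ### The signed count -/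

/-- The contribution of `w`, read from height `h`, to the signed count of paths with `k` hills. -/
def wt (k h : ℕ) (w : List SStep) : ℤ :=
  if hillsFrom h w = k then (-1) ^ hposFrom h w else 0

theorem wt_D (k h : ℕ) (w : List SStep) : wt k (h + 1) (D :: w) = wt k h w := by
  simp [wt, hillsFrom_D, hposFrom_D]

theorem wt_H_zero (k : ℕ) (w : List SStep) : wt k 0 (H :: w) = wt k 0 w := by
  simp [wt, hillsFrom_H, hposFrom_H]

theorem wt_H_succ (k h : ℕ) (w : List SStep) :
    wt k (h + 1) (H :: w) = - wt k (h + 1) w := by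
  simp only [wt, hillsFrom_H, hposFrom_H]
  split_ifs <;> simp_all [pow_succ]

theorem wt_U_succ (k h : ℕ) (w : List SStep) :
    wt k (h + 1) (U :: w) = wt k (h + 2) w := by
  simp [wt, hillsFrom_U, hposFrom_U]

/-- After an up step from the axis, a continuation not starting with `D` creates no hill. -/
theorem wt_U_zero (k : ℕ) (w : List SStep) (hw : w[0]? ≠ some D) :
    wt k 0 (U :: w) = wt k 1 w := by
  simp only [wt, hillsFrom_U, hposFrom_U]
  simp [hw]

theorem wt_UD_zero (w : List SStep) : wt 0 0 (U :: D :: w) = 0 := by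
  simp [wt, hillsFrom_U]

theorem wt_UD_succ (k : ℕ) (w : List SStep) :
    wt (k + 1) 0 (U :: D :: w) = wt k 0 w := by
  simp [wt, hillsFrom_U, hposFrom_U, hillsFrom_D, hposFrom_D]

/-- Paths that start with `U` on the axis: compared with reading the continuation from height `1`,
only the continuations starting with `D` change their weight. -/
theorem sum_wt_up (k m : ℕ) :
    ∑ w ∈ paths m 1, wt k 0 (U :: w) =
      ∑ w ∈ paths m 1, wt k 1 w - ∑ w ∈ paths m 0, wt k 0 w
        + ∑ w ∈ paths m 0, wt k 0 (U :: D :: w) := by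
  cases m with
  | zero =>
    rw [sum_paths_zero_succ, sum_paths_zero_succ]
    simp [wt_D]
  | succ m =>
    rw [sum_paths_succ_succ, sum_paths_succ_succ]
    simp [wt_D, wt_U_zero]
    ring

theorem sum_wt (m : ℕ) : ∀ h k : ℕ, ∑ w ∈ paths m h, wt k h w = (m.choose k : ℤ) := by
  induction m with
  | zero =>
    intro h
    induction h with
    | zero => intro k; cases k <;> simp [paths, wt, hillsFrom, hposFrom]
    | succ h ih => intro k; rw [sum_paths_zero_succ]; simpa only [wt_D] using ih k
  | succ m ihm =>
    intro h
    induction h with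
    | zero =>
      intro k
      rw [sum_paths_succ_zero, sum_wt_up, ihm 1, ihm 0]
      simp only [wt_H_zero, ihm 0]
      cases k with
      | zero => simp [wt_UD_zero]
      | succ k =>
        simp only [wt_UD_succ, ihm 0, Nat.choose_succ_succ]
        push_cast
        ring
    | succ h ih =>
      intro k
      rw [sum_paths_succ_succ]
      simp only [wt_D, wt_H_succ, wt_U_succ, Finset.sum_neg_distrib, ih, ihm]
      ring

/-- For all `0 ≤ k ≤ n`, `Σ_p (-1)^{h(p)} = C(n,k)`, the sum being over all
Schröder paths `p` of semilength `n` with exactly `k` hills, where `h(p)` is the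
number of horizontal steps of `p` at positive height. -/
theorem stmt19 (n k : ℕ) (hkn : k ≤ n) :
    (∑ᶠ w ∈ {w : List SStep | IsSchroeder n w ∧ hills w = k}, (-1 : ℤ) ^ hpos w) =
      (n.choose k : ℤ) := by
  have hhills : ∀ w, hills w = hillsFrom 0 w := by simp [hills, hillsFrom]
  have hhpos : ∀ w, hpos w = hposFrom 0 w := by simp [hpos, hposFrom]
  have hset : {w : List SStep | IsSchroeder n w ∧ hills w = k} =
      ((paths n 0).filter (fun w => hillsFrom 0 w = k) : Finset (List SStep)) := by
    ext w
    simp [mem_paths, IsPathFrom, IsSchroeder, hhills]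
  rw [hset, finsum_mem_coe_finset, Finset.sum_filter, ← sum_wt n 0 k]
  simp [wt, hhpos]
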